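/- Let x ∈ L be a non-torsion element with normal form x = a_1 e_1 + ⋯ + a_n e_n + a c, and set R := S^x. Then the following are equivalent: (i) for every z ∈ L, the ideal I^z := S(z)^x · S(−z)^x of R (generated by all products st with s ∈ S(z)^x and t ∈ S(−z)^x) satisfies dim_ℂ(R/I^z) < ∞; (ii) gcd(p_i, a_i) = 1 for all 1 ≤ i ≤ n. -/

import Mathlib

set_option synthInstance.maxHeartbeats 1000000
set_option maxHeartbeats 1000000
noncomputable section

open MvPolynomial

def LRel (ι : Type) [DecidableEq ι] (p : ι → ℕ) : AddSubgroup (Option ι → ℤ) :=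
  AddSubgroup.closure
    { v | ∃ i : ι, v = (p i : ℤ) • Pi.single (some i) 1 - Pi.single (none : Option ι) 1 }

abbrev LGroup (ι : Type) [DecidableEq ι] (p : ι → ℕ) : Type :=
  (Option ι → ℤ) ⧸ LRel ι p

def egen {ι : Type} [DecidableEq ι] (p : ι → ℕ) (i : ι) : LGroup ι p :=
  QuotientAddGroup.mk (Pi.single (some i) 1)

def cgen {ι : Type} [DecidableEq ι] (p : ι → ℕ) : LGroup ι p :=
  QuotientAddGroup.mk (Pi.single (none : Option ι) 1)

def Lplus {ι : Type} [DecidableEq ι] (p : ι → ℕ) : AddSubmonoid (LGroup ι p) :=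
  AddSubmonoid.closure (Set.range (egen p))

abbrev SPoly (ι : Type) : Type := MvPolynomial (ι ⊕ Fin 2) ℂ

def SIdl (ι : Type) (p : ι → ℕ) (c0 c1 : ι → ℂ) : Ideal (SPoly ι) :=
  Ideal.span { f | ∃ i : ι,
    f = X (Sum.inl i) ^ (p i) - (C (c0 i) * X (Sum.inr 0) + C (c1 i) * X (Sum.inr 1)) }

abbrev SAlg (ι : Type) (p : ι → ℕ) (c0 c1 : ι → ℂ) : Type := SPoly ι ⧸ SIdl ι p c0 c1

def wtA {ι : Type} [Fintype ι] [DecidableEq ι] (p : ι → ℕ) (m : (ι ⊕ Fin 2) →₀ ℕ) :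
    LGroup ι p :=
  (∑ i : ι, m (Sum.inl i) • egen p i) + (m (Sum.inr 0) + m (Sum.inr 1)) • cgen p

def polyCompA {ι : Type} [Fintype ι] [DecidableEq ι] (p : ι → ℕ) (y : LGroup ι p) :
    Submodule ℂ (SPoly ι) where
  carrier := { f | ∀ m, coeff m f ≠ 0 → wtA p m = y }
  add_mem' := by
    intro f g hf hg m hm
    by_cases h : coeff m f = 0
    · refine hg m fun h' => hm ?_
      simp [coeff_add, h, h']
    · exact hf m h
  zero_mem' := by
    intro m hm
    simp at hm
  smul_mem' := by
    intro c f hf m hm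
    refine hf m fun h => hm ?_
    simp [coeff_smul, h]

def SCompA {ι : Type} [Fintype ι] [DecidableEq ι] (p : ι → ℕ) (c0 c1 : ι → ℂ)
    (y : LGroup ι p) : Submodule ℂ (SAlg ι p c0 c1) :=
  (polyCompA p y).map (Ideal.Quotient.mkₐ ℂ (SIdl ι p c0 c1)).toLinearMap

def SVerA {ι : Type} [Fintype ι] [DecidableEq ι] (p : ι → ℕ) (c0 c1 : ι → ℂ)
    (x : LGroup ι p) : Submodule ℂ (SAlg ι p c0 c1) :=
  ⨆ k : ℤ, SCompA p c0 c1 (k • x)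

def SShiftA {ι : Type} [Fintype ι] [DecidableEq ι] (p : ι → ℕ) (c0 c1 : ι → ℂ)
    (y x : LGroup ι p) : Submodule ℂ (SAlg ι p c0 c1) :=
  ⨆ k : ℤ, SCompA p c0 c1 (y + k • x)

/-!
Modulo `x`, the `L`-grading of `S` becomes a grading by `L ⧸ ⟨x⟩` whose piece of degree `0` is
`R = S^x` and whose other pieces are the modules `S(y)^x`. The projection onto degree `0` is an
`R`-linear retraction of `R ⊆ S`, so `IS ∩ R = I` and `R ⧸ I` embeds into `S ⧸ IS` for every ideal
`I` of `R`; by the Nullstellensatz, `S ⧸ IS` is finite-dimensional once `I` vanishes at no point of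
`Spec S` other than the origin.

At a point with `(t₀, t₁) ≠ 0` at most one `x_i` vanishes, because the `λ_i` are distinct. If the
coefficient `a_i` of `x` is a unit modulo `p_i`, some degree in `y + ℤx` has coefficient `0` at
`e_i`, so `S(y)^x` contains a monomial without `x_i`, which does not vanish at the point. Applied
to `y = z` and `y = -z`, this shows that `I^z` vanishes at most at the origin.

If `a_i` is not a unit modulo `p_i`, no degree in `e_i + ℤx` has coefficient `0` at `e_i`. Hence
`S(e_i)^x ⊆ x_i S`, and `I^{e_i}` vanishes on the curve `x_i = 0`, where a power of some `t_ε`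
that lies in `R` takes every complex value.
-/

section FiniteAlgebras

variable {k A : Type*} [Field k] [CommRing A] [Algebra k A]

theorem isNilpotent_of_forall_algHom_eq_zero [IsAlgClosed k] [Algebra.FiniteType k A] {a : A}
    (ha : ∀ φ : A →ₐ[k] k, φ a = 0) : IsNilpotent a := by
  have : IsJacobsonRing A := isJacobsonRing_of_finiteType (A := k)
  rw [← mem_nilradical, nilradical, Ideal.radical_eq_jacobson, Ideal.jacobson, Ideal.mem_sInf]
  rintro m ⟨-, hm⟩
  let _ := Ideal.Quotient.field m
  have : Module.Finite k (A ⧸ m) := finite_of_finite_type_of_isJacobsonRing k (A ⧸ m)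
  have residueEquiv : k ≃ₐ[k] A ⧸ m := AlgEquiv.ofBijective (Algebra.ofId k (A ⧸ m))
    IsAlgClosed.algebraMap_bijective_of_isIntegral
  rw [← Ideal.Quotient.eq_zero_iff_mem]
  exact (map_eq_zero_iff _ residueEquiv.symm.injective).mp
    (ha (residueEquiv.symm.toAlgHom.comp (Ideal.Quotient.mkₐ k m)))

theorem finite_of_adjoin_eq_top_of_algHom_eq_zero [IsAlgClosed k] {s : Set A} (hs : s.Finite)
    (hgen : Algebra.adjoin k s = ⊤) (hzero : ∀ φ : A →ₐ[k] k, ∀ a ∈ s, φ a = 0) :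
    Module.Finite k A := by
  have : Algebra.FiniteType k A := ⟨hs.toFinset, by rwa [hs.coe_toFinset]⟩
  have integral (a) (ha : a ∈ s) : IsIntegral k a := by
    obtain ⟨n, hn⟩ := isNilpotent_of_forall_algHom_eq_zero fun φ => hzero φ a ha
    exact ⟨Polynomial.X ^ n, Polynomial.monic_X_pow n, by simpa using hn⟩
  rw [Module.finite_def, ← Algebra.top_toSubmodule, ← hgen]
  exact fg_adjoin_of_finite hs integral

theorem not_finite_of_forall_exists_algHom_apply_eq [Infinite k] (a : A)
    (ha : ∀ r : k, ∃ φ : A →ₐ[k] k, φ a = r) : ¬ Module.Finite k A := fun _ =>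
  have := Finite.of_surjective (fun φ : A →ₐ[k] k => φ a) ha
  not_finite k

end FiniteAlgebras

section Retractions

theorem comap_map_algebraMap_eq_self_of_retraction {R A : Type*} [CommRing R] [CommRing A]
    [Algebra R A] (π : A →ₗ[R] R) (hπ : ∀ r, π (algebraMap R A r) = r) (I : Ideal R) :
    (I.map (algebraMap R A)).comap (algebraMap R A) = I := by
  refine le_antisymm (fun r hr => ?_) Ideal.le_comap_map
  have hr' : algebraMap R A r ∈ I • (⊤ : Submodule R A) := by
    rw [Ideal.smul_top_eq_map]
    exact hr
  have : π (algebraMap R A r) ∈ I • (⊤ : Submodule R A).map π := by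
    rw [← Submodule.map_smul'']
    exact Submodule.mem_map_of_mem hr'
  rw [hπ] at this
  exact (Submodule.smul_le.mpr fun i hi r _ => I.mul_mem_right r hi) this

theorem finite_quotient_of_retraction_of_algHom_eq_zero {k R A : Type*} [Field k] [IsAlgClosed k]
    [CommRing R] [CommRing A] [Algebra k R] [Algebra k A] [Algebra R A] [IsScalarTower k R A]
    (π : A →ₗ[R] R) (hπ : ∀ r, π (algebraMap R A r) = r) (I : Ideal R) {s : Set A}
    (hs : s.Finite) (hgen : Algebra.adjoin k s = ⊤)
    (hzero : ∀ φ : A →ₐ[k] k, (∀ r ∈ I, φ (algebraMap R A r) = 0) → ∀ a ∈ s, φ a = 0) :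
    Module.Finite k (R ⧸ I) := by
  let J := I.map (algebraMap R A)
  let mkJ := Ideal.Quotient.mkₐ k J
  have hgenJ : Algebra.adjoin k (mkJ '' s) = ⊤ := by
    rw [← AlgHom.map_adjoin, hgen, Algebra.map_top, AlgHom.range_eq_top]
    exact Ideal.Quotient.mkₐ_surjective k J
  have : Module.Finite k (A ⧸ J) := by
    refine finite_of_adjoin_eq_top_of_algHom_eq_zero (hs.image mkJ) hgenJ ?_
    rintro φ _ ⟨a, ha, rfl⟩
    refine hzero (φ.comp mkJ) (fun r hr => ?_) a ha
    have : mkJ (algebraMap R A r) = 0 :=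
      Ideal.Quotient.eq_zero_iff_mem.mpr (Ideal.mem_map_of_mem _ hr)
    rw [AlgHom.comp_apply, this, map_zero]
  let ofQuotient : R ⧸ I →ₐ[k] A ⧸ J :=
    Ideal.quotientMapₐ J (IsScalarTower.toAlgHom k R A) Ideal.le_comap_map
  have injective_ofQuotient : Function.Injective ofQuotient :=
    Ideal.quotientMap_injective' (H := Ideal.le_comap_map)
      (comap_map_algebraMap_eq_self_of_retraction π hπ I).le
  exact Module.Finite.of_injective ofQuotient.toLinearMap injective_ofQuotient

end Retractions

section GradedAlgebras

variable {k A G : Type*} [CommRing k] [CommRing A] [Algebra k A] (𝒜 : G → Submodule k A)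

/-- The pieces of `A ⧸ I` for the grading induced from `A`. They form a grading when `I` is
homogeneous. -/
abbrev quotientPiece (I : Ideal A) (g : G) : Submodule k (A ⧸ I) :=
  (𝒜 g).map (Ideal.Quotient.mkₐ k I).toLinearMap

instance quotientPiece.gradedMonoid [AddMonoid G] [SetLike.GradedMonoid 𝒜] (I : Ideal A) :
    SetLike.GradedMonoid (quotientPiece 𝒜 I) where
  one_mem := ⟨1, SetLike.GradedOne.one_mem, map_one (Ideal.Quotient.mkₐ k I)⟩
  mul_mem := by
    rintro g h _ _ ⟨a, ha, rfl⟩ ⟨b, hb, rfl⟩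
    exact ⟨a * b, SetLike.mul_mem_graded ha hb, map_mul (Ideal.Quotient.mkₐ k I) a b⟩

variable [DecidableEq G] [AddMonoid G] [GradedAlgebra 𝒜]

theorem isInternal_quotientPiece {I : Ideal A} (hI : I.IsHomogeneous 𝒜) :
    DirectSum.IsInternal (quotientPiece 𝒜 I) := by
  let mkPieces := DirectSum.lmap fun g =>
    (Ideal.Quotient.mkₐ k I).toLinearMap.submoduleMap (𝒜 g)
  have coe_mkPieces (y) : DirectSum.coeAddMonoidHom (quotientPiece 𝒜 I) (mkPieces y) =
      Ideal.Quotient.mkₐ k I (DirectSum.coeAddMonoidHom 𝒜 y) := by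
    induction y using DirectSum.induction_on with
    | zero => simp
    | of g a => simp [mkPieces]
    | add y z hy hz => simp only [map_add, hy, hz]
  constructor
  · refine (injective_iff_map_eq_zero _).mpr fun x hx => ?_
    obtain ⟨y, rfl⟩ : ∃ y, mkPieces y = x :=
      (DirectSum.lmap_surjective _).mpr (fun g => LinearMap.submoduleMap_surjective _ _) x
    rw [coe_mkPieces, Ideal.Quotient.mkₐ_eq_mk, Ideal.Quotient.eq_zero_iff_mem] at hx
    ext g
    have hyg := hI g hx
    have : DirectSum.decompose 𝒜 (DirectSum.coeAddMonoidHom 𝒜 y) = y :=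
      (DirectSum.decompose 𝒜).apply_symm_apply y
    rw [this] at hyg
    simpa [mkPieces, DirectSum.lmap_apply] using Ideal.Quotient.eq_zero_iff_mem.mpr hyg
  · intro b
    obtain ⟨a, rfl⟩ := Ideal.Quotient.mkₐ_surjective k I b
    refine ⟨mkPieces (DirectSum.decompose 𝒜 a), ?_⟩
    rw [coe_mkPieces]
    exact congrArg _ ((DirectSum.decompose 𝒜).symm_apply_apply a)

/-- The grading induced on the quotient of a graded algebra by a homogeneous ideal. -/
abbrev quotientGradedAlgebra {I : Ideal A} (hI : I.IsHomogeneous 𝒜) :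
    GradedAlgebra (quotientPiece 𝒜 I) :=
  { quotientPiece.gradedMonoid 𝒜 I, (isInternal_quotientPiece 𝒜 hI).chooseDecomposition with }

theorem exists_retraction_of_toSubmodule_eq_zero_piece (R : Subalgebra k A)
    (hR : Subalgebra.toSubmodule R = 𝒜 0) :
    ∃ π : A →ₗ[R] R, ∀ r, π (algebraMap R A r) = r := by
  have mem_R {a : A} : a ∈ R ↔ a ∈ 𝒜 0 := by rw [← hR, Subalgebra.mem_toSubmodule]
  refine ⟨{ toFun := fun a => ⟨DirectSum.decompose 𝒜 a 0, mem_R.mpr (SetLike.coe_mem _)⟩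
            map_add' := fun a b => by ext; simp
            map_smul' := fun r a => ?_ }, fun r => ?_⟩
  · exact Subtype.ext (DirectSum.coe_decompose_mul_of_left_mem_zero 𝒜 (mem_R.mp r.2))
  · exact Subtype.ext (DirectSum.decompose_of_mem_same 𝒜 (mem_R.mp r.2))

end GradedAlgebras

/-- The ideal of `R` generated by the products `s * t ∈ R` with `s ∈ M` and `t ∈ N`. For
`R = S^x`, `M = S(z)^x` and `N = S(-z)^x` this is the ideal `I^z`. -/
def productIdeal {k A : Type*} [CommSemiring k] [CommRing A] [Algebra k A] (R : Subalgebra k A)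
    (M N : Submodule k A) : Ideal R :=
  Ideal.span {w : R | ∃ s ∈ M, ∃ t ∈ N, (w : A) = s * t}

section WeightGroup

variable {ι : Type} [DecidableEq ι] (p : ι → ℕ)

theorem nsmul_egen (i : ι) : p i • egen p i = cgen p := by
  rw [egen, cgen, ← QuotientAddGroup.mk_nsmul, eq_comm, QuotientAddGroup.eq]
  exact AddSubgroup.subset_closure ⟨i, by rw [natCast_zsmul, neg_add_eq_sub]⟩

/-- The character of `L` that reads the coefficient of `e_i` modulo `p_i`. -/
def residue (i : ι) : LGroup ι p →+ ZMod (p i) :=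
  QuotientAddGroup.lift (LRel ι p)
    ((Int.castAddHom (ZMod (p i))).comp (Pi.evalAddMonoidHom (fun _ : Option ι => ℤ) (some i)))
    <| by
      rw [LRel, AddSubgroup.closure_le]
      rintro _ ⟨j, rfl⟩
      obtain rfl | h := eq_or_ne i j
      · simp
      · simp [h]

theorem residue_egen (i j : ι) : residue p i (egen p j) = if j = i then 1 else 0 := by
  change (((Pi.single (some j) 1 : Option ι → ℤ) (some i) : ℤ) : ZMod (p i)) = _
  simp [Pi.single_apply, eq_comm]

theorem residue_cgen (i : ι) : residue p i (cgen p) = 0 := by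
  change (((Pi.single none 1 : Option ι → ℤ) (some i) : ℤ) : ZMod (p i)) = _
  simp

theorem exists_residue_add_zsmul_eq_zero {p : ι → ℕ} {i : ι} {x : LGroup ι p}
    (hx : IsUnit (residue p i x)) (y : LGroup ι p) :
    ∃ k : ℤ, residue p i (y + k • x) = 0 := by
  obtain ⟨w, hw⟩ := hx.exists_left_inv
  obtain ⟨k, hk⟩ := ZMod.intCast_surjective (-(residue p i y * w))
  refine ⟨k, ?_⟩
  rw [map_add, map_zsmul, zsmul_eq_mul, hk, neg_mul, mul_assoc, hw, mul_one, add_neg_cancel]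

variable [Fintype ι]

theorem residue_sum_zsmul_egen_add_zsmul_cgen (i : ι) (b : ι → ℤ) (β : ℤ) :
    residue p i (∑ j, b j • egen p j + β • cgen p) = b i := by
  simp [residue_egen, residue_cgen]

theorem exists_eq_sum_zsmul_egen_add_zsmul_cgen (y : LGroup ι p) :
    ∃ (b : ι → ℤ) (β : ℤ), y = ∑ i, b i • egen p i + β • cgen p := by
  obtain ⟨v, rfl⟩ := QuotientAddGroup.mk'_surjective (LRel ι p) y
  refine ⟨fun i => v (some i), v none, ?_⟩
  have hv : v = ∑ i, v (some i) • Pi.single (some i) 1 + v none • Pi.single none 1 := by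
    conv_lhs => rw [← Finset.univ_sum_single v]
    simp [Fintype.sum_option, add_comm, ← Pi.single_smul]
  conv_lhs => rw [hv]
  rw [map_add, map_sum, map_zsmul]
  simp_rw [map_zsmul]
  rfl

variable {p}

theorem exists_eq_sum_val_residue_nsmul_egen_add_zsmul_cgen (hp : ∀ i, p i ≠ 0)
    (y : LGroup ι p) :
    ∃ δ : ℤ, y = ∑ i, (residue p i y).val • egen p i + δ • cgen p := by
  have (i : ι) : NeZero (p i) := ⟨hp i⟩
  obtain ⟨b, β, hy⟩ := exists_eq_sum_zsmul_egen_add_zsmul_cgen p y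
  have hres (i : ι) : ((residue p i y).val : ℤ) = b i % p i := by
    rw [hy, residue_sum_zsmul_egen_add_zsmul_cgen, ZMod.val_intCast]
  have split (i : ι) : b i • egen p i = (residue p i y).val • egen p i + (b i / p i) • cgen p := by
    rw [← natCast_zsmul, hres, ← nsmul_egen p i, ← natCast_zsmul, ← mul_zsmul', ← add_zsmul,
      Int.emod_add_mul_ediv]
  refine ⟨∑ i, b i / p i + β, ?_⟩
  conv_lhs => rw [hy]
  rw [Finset.sum_congr rfl fun i _ => split i, Finset.sum_add_distrib, add_zsmul,
    ← Finset.sum_smul, add_assoc]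

theorem prod_nsmul_mem_zmultiples_cgen (y : LGroup ι p) :
    (∏ i, p i) • y ∈ AddSubgroup.zmultiples (cgen p) := by
  let H := (AddSubgroup.zmultiples (cgen p)).comap (nsmulAddMonoidHom (∏ i, p i))
  have cgen_mem : cgen p ∈ H := nsmul_mem (AddSubgroup.mem_zmultiples _) _
  have egen_mem (i : ι) : egen p i ∈ H := by
    obtain ⟨r, hr⟩ := Finset.dvd_prod_of_mem p (Finset.mem_univ i)
    rw [AddSubgroup.mem_comap, nsmulAddMonoidHom_apply, hr, mul_nsmul, nsmul_egen]
    exact nsmul_mem (AddSubgroup.mem_zmultiples _) r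
  obtain ⟨b, β, rfl⟩ := exists_eq_sum_zsmul_egen_add_zsmul_cgen p y
  exact add_mem (sum_mem fun i _ => zsmul_mem (egen_mem i) _) (zsmul_mem cgen_mem _)

omit [Fintype ι] in
theorem exists_zsmul_eq_nsmul_cgen [Finite ι] (hp : ∀ i, p i ≠ 0) {x : LGroup ι p}
    (hx : ¬ IsOfFinAddOrder x) : ∃ (k : ℤ) (N : ℕ), 0 < N ∧ k • x = N • cgen p := by
  have := Fintype.ofFinite ι
  obtain ⟨m, hm⟩ := prod_nsmul_mem_zmultiples_cgen x
  have hm0 : m ≠ 0 := by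
    rintro rfl
    refine hx (isOfFinAddOrder_iff_nsmul_eq_zero.mpr ⟨∏ i, p i, ?_, ?_⟩)
    · exact Finset.prod_pos fun i _ => Nat.pos_of_ne_zero (hp i)
    · simpa using hm.symm
  refine ⟨m.sign * (∏ i, p i : ℕ), m.natAbs, Int.natAbs_pos.mpr hm0, ?_⟩
  rw [mul_zsmul, natCast_zsmul, ← hm, ← mul_zsmul, Int.sign_mul_self_eq_natAbs, natCast_zsmul]

theorem exists_add_zsmul_eq_sum_nsmul_egen_add_nsmul_cgen (hp : ∀ i, p i ≠ 0) {x : LGroup ι p}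
    (hx : ¬ IsOfFinAddOrder x) {s : Set ι} (hs : s.Subsingleton)
    (hunit : ∀ i ∈ s, IsUnit (residue p i x)) (y : LGroup ι p) :
    ∃ (k : ℤ) (b : ι → ℕ) (β : ℕ), (∀ i ∈ s, b i = 0) ∧
      y + k • x = ∑ i, b i • egen p i + β • cgen p := by
  obtain ⟨k, hk⟩ : ∃ k : ℤ, ∀ i ∈ s, residue p i (y + k • x) = 0 := by
    obtain rfl | ⟨i, rfl⟩ := hs.eq_empty_or_singleton
    · exact ⟨0, by simp⟩
    · simpa using exists_residue_add_zsmul_eq_zero (hunit i rfl) y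
  obtain ⟨δ, hδ⟩ := exists_eq_sum_val_residue_nsmul_egen_add_zsmul_cgen hp (y + k • x)
  obtain ⟨K, N, hN, hK⟩ := exists_zsmul_eq_nsmul_cgen hp hx
  obtain ⟨β, hβ⟩ : ∃ β : ℕ, δ + δ.natAbs * N = β := by
    have : (δ.natAbs : ℤ) ≤ δ.natAbs * N := le_mul_of_one_le_right (by positivity) (mod_cast hN)
    exact ⟨(δ + δ.natAbs * N).toNat, by omega⟩
  refine ⟨k + δ.natAbs * K, fun i => (residue p i (y + k • x)).val, β, fun i hi => ?_, ?_⟩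
  · simp only [hk i hi, ZMod.val_zero]
  · calc y + (k + δ.natAbs * K) • x
        = (y + k • x) + (δ.natAbs : ℤ) • K • x := by rw [add_zsmul, mul_zsmul, add_assoc]
      _ = ∑ i, (residue p i (y + k • x)).val • egen p i + (δ + δ.natAbs * N) • cgen p := by
        conv_lhs => rw [hδ, hK]
        rw [add_zsmul, mul_zsmul, natCast_zsmul (cgen p) N, add_assoc]
      _ = _ := by rw [hβ, natCast_zsmul]

end WeightGroup

section Coarsening

variable {R M N σ : Type*} [CommSemiring R] [AddCommMonoid M] [AddCommMonoid N]

theorem weightedHomogeneousSubmodule_comp (w : σ → M) (f : M →+ N) (n : N) :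
    weightedHomogeneousSubmodule R (f ∘ w) n =
      ⨆ (m : M) (_ : f m = n), weightedHomogeneousSubmodule R w m := by
  have weight_comp (d : σ →₀ ℕ) : Finsupp.weight (f ∘ w) d = f (Finsupp.weight w d) := by
    simp [Finsupp.weight_apply, Finsupp.sum]
  refine le_antisymm (fun φ hφ => ?_) (iSup₂_le fun m hm φ hφ d hd => ?_)
  · rw [← support_sum_monomial_coeff φ]
    refine sum_mem fun d hd => Submodule.mem_iSup_of_mem (Finsupp.weight w d)
      (Submodule.mem_iSup_of_mem ?_ (isWeightedHomogeneous_monomial w d _ rfl))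
    rw [← weight_comp]
    exact hφ (mem_support_iff.mp hd)
  · rw [weight_comp, hφ hd, hm]

end Coarsening

section VeroneseGrading

variable {ι : Type} (p : ι → ℕ) (c0 c1 : ι → ℂ)

attribute [local instance] weightedGradedAlgebra

theorem isHomogeneous_SIdl {M : Type*} [AddCommMonoid M] [DecidableEq M] {w : ι ⊕ Fin 2 → M}
    (hw : ∀ i ε, p i • w (Sum.inl i) = w (Sum.inr ε)) :
    (SIdl ι p c0 c1).IsHomogeneous (weightedHomogeneousSubmodule ℂ w) := by
  refine Ideal.homogeneous_span _ _ ?_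
  rintro _ ⟨i, rfl⟩
  have isWeightedHomogeneous_C_mul_X (c : ℂ) (ε : Fin 2) :
      IsWeightedHomogeneous w (C c * X (Sum.inr ε)) (p i • w (Sum.inl i)) := by
    rw [hw i ε]
    exact (isWeightedHomogeneous_X ℂ w _).C_mul c
  exact ⟨p i • w (Sum.inl i), ((isWeightedHomogeneous_X ℂ w _).pow (p i)).sub
    ((isWeightedHomogeneous_C_mul_X _ 0).add (isWeightedHomogeneous_C_mul_X _ 1))⟩

variable [DecidableEq ι]

/-- The degrees `deg x_i = e_i` and `deg t_0 = deg t_1 = c` of the variables. -/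
def varWeight : ι ⊕ Fin 2 → LGroup ι p := Sum.elim (egen p) fun _ => cgen p

/-- The degrees of the variables in `L ⧸ ⟨x⟩`; for them `S^x` is the piece of degree `0` of `S`
and the modules `S(y)^x` are the other pieces. -/
def veroneseWeight (x : LGroup ι p) : ι ⊕ Fin 2 → LGroup ι p ⧸ AddSubgroup.zmultiples x :=
  QuotientAddGroup.mk' (AddSubgroup.zmultiples x) ∘ varWeight p

theorem nsmul_veroneseWeight_inl (x : LGroup ι p) (i : ι) (ε : Fin 2) :
    p i • veroneseWeight p x (Sum.inl i) = veroneseWeight p x (Sum.inr ε) := by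
  simp only [veroneseWeight, varWeight, Function.comp_apply, Sum.elim_inl, Sum.elim_inr,
    ← map_nsmul, nsmul_egen]

/-- The piece of `S` of degree `g ∈ L ⧸ ⟨x⟩`. -/
abbrev veronesePiece (x : LGroup ι p) :
    LGroup ι p ⧸ AddSubgroup.zmultiples x → Submodule ℂ (SAlg ι p c0 c1) :=
  quotientPiece (weightedHomogeneousSubmodule ℂ (veroneseWeight p x)) (SIdl ι p c0 c1)

instance veronesePiece.gradedMonoid (x : LGroup ι p) :
    SetLike.GradedMonoid (veronesePiece p c0 c1 x) :=
  have : SetLike.GradedMonoid (weightedHomogeneousSubmodule ℂ (veroneseWeight p x)) :=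
    WeightedHomogeneousSubmodule.gradedMonoid
  quotientPiece.gradedMonoid _ _

variable {p} in
theorem sum_nsmul_veroneseWeight_add_nsmul [Fintype ι] {x y : LGroup ι p} {k : ℤ} {b : ι → ℕ}
    {β : ℕ} (h : y + k • x = ∑ i, b i • egen p i + β • cgen p) (ε : Fin 2) :
    ∑ i, b i • veroneseWeight p x (Sum.inl i) + β • veroneseWeight p x (Sum.inr ε) =
      (y : LGroup ι p ⧸ AddSubgroup.zmultiples x) := by
  simp only [veroneseWeight, varWeight, Function.comp_apply, Sum.elim_inl, Sum.elim_inr,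
    ← map_nsmul, ← map_sum, ← map_add, ← h]
  rw [QuotientAddGroup.mk'_apply, eq_comm, QuotientAddGroup.eq, neg_add_cancel_left]
  exact zsmul_mem (AddSubgroup.mem_zmultiples x) k

variable [Fintype ι]

theorem polyCompA_eq_weightedHomogeneousSubmodule (y : LGroup ι p) :
    polyCompA p y = weightedHomogeneousSubmodule ℂ (varWeight p) y := by
  have weight_varWeight (m) : Finsupp.weight (varWeight p) m = wtA p m := by
    simp [Finsupp.weight_apply, Finsupp.sum_fintype, varWeight, wtA, add_nsmul]
  ext f
  exact forall_congr' fun m => by rw [weight_varWeight]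

theorem SShiftA_eq_veronesePiece (y x : LGroup ι p) :
    SShiftA p c0 c1 y x = veronesePiece p c0 c1 x (y : LGroup ι p ⧸ AddSubgroup.zmultiples x) := by
  have mk_eq_iff (m : LGroup ι p) : QuotientAddGroup.mk' (AddSubgroup.zmultiples x) m =
      (y : LGroup ι p ⧸ AddSubgroup.zmultiples x) ↔ ∃ k : ℤ, y + k • x = m := by
    rw [QuotientAddGroup.mk'_apply, eq_comm, QuotientAddGroup.eq, AddSubgroup.mem_zmultiples_iff]
    simp only [eq_neg_add_iff_add_eq]
  rw [veronesePiece, quotientPiece, veroneseWeight, weightedHomogeneousSubmodule_comp]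
  simp_rw [mk_eq_iff, iSup_exists]
  rw [iSup_comm]
  simp_rw [iSup_iSup_eq_right, Submodule.map_iSup, ← polyCompA_eq_weightedHomogeneousSubmodule]
  rfl

theorem SVerA_eq_veronesePiece_zero (x : LGroup ι p) :
    SVerA p c0 c1 x = veronesePiece p c0 c1 x 0 := by
  rw [← QuotientAddGroup.mk_zero, ← SShiftA_eq_veronesePiece, SVerA, SShiftA]
  simp_rw [zero_add]

variable {p c0 c1} in
theorem exists_retraction_of_toSubmodule_eq_SVerA {x : LGroup ι p}
    {R : Subalgebra ℂ (SAlg ι p c0 c1)} (hR : Subalgebra.toSubmodule R = SVerA p c0 c1 x) :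
    ∃ π : SAlg ι p c0 c1 →ₗ[R] R, ∀ r, π (algebraMap R _ r) = r := by
  classical
  have homogeneous := isHomogeneous_SIdl p c0 c1 (w := veroneseWeight p x)
    (nsmul_veroneseWeight_inl p x)
  let _ : GradedAlgebra (veronesePiece p c0 c1 x) := quotientGradedAlgebra _ homogeneous
  exact exists_retraction_of_toSubmodule_eq_zero_piece (veronesePiece p c0 c1 x) R
    (hR.trans (SVerA_eq_veronesePiece_zero p c0 c1 x))

end VeroneseGrading

section Coordinates

variable {ι : Type} (p : ι → ℕ) (c0 c1 : ι → ℂ)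

/-- The generators of `S`: `coord (inl i)` is the class of `x_i` and `coord (inr ε)` that of
`t_ε`. -/
def coord (v : ι ⊕ Fin 2) : SAlg ι p c0 c1 := Ideal.Quotient.mkₐ ℂ (SIdl ι p c0 c1) (X v)

theorem coord_inl_pow (i : ι) :
    coord p c0 c1 (Sum.inl i) ^ p i =
      c0 i • coord p c0 c1 (Sum.inr 0) + c1 i • coord p c0 c1 (Sum.inr 1) := by
  simp only [coord, ← map_pow, ← map_smul, ← map_add, smul_eq_C_mul]
  exact Ideal.Quotient.eq.mpr (Ideal.subset_span ⟨i, rfl⟩)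

theorem adjoin_range_coord : Algebra.adjoin ℂ (Set.range (coord p c0 c1)) = ⊤ := by
  have : Set.range (coord p c0 c1) = Ideal.Quotient.mkₐ ℂ (SIdl ι p c0 c1) '' Set.range X :=
    Set.range_comp _ X
  rw [this, ← AlgHom.map_adjoin, adjoin_range_X, Algebra.map_top, AlgHom.range_eq_top]
  exact Ideal.Quotient.mkₐ_surjective ℂ _

variable {p c0 c1}

theorem algHom_coord_inl_pow (E : SAlg ι p c0 c1 →ₐ[ℂ] ℂ) (i : ι) :
    E (coord p c0 c1 (Sum.inl i)) ^ p i =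
      c0 i * E (coord p c0 c1 (Sum.inr 0)) + c1 i * E (coord p c0 c1 (Sum.inr 1)) := by
  rw [← map_pow, coord_inl_pow, map_add, map_smul, map_smul, smul_eq_mul, smul_eq_mul]

variable (c0 c1) in
theorem exists_algHom_coord_inr_eq (hp : ∀ i, p i ≠ 0) (t : Fin 2 → ℂ) :
    ∃ E : SAlg ι p c0 c1 →ₐ[ℂ] ℂ, ∀ ε, E (coord p c0 c1 (Sum.inr ε)) = t ε := by
  choose root hroot using fun i =>
    IsAlgClosed.exists_pow_nat_eq (c0 i * t 0 + c1 i * t 1) (Nat.pos_of_ne_zero (hp i))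
  let evalPoint : SPoly ι →ₐ[ℂ] ℂ := aeval (Sum.elim root t)
  have evalPoint_eq_zero : SIdl ι p c0 c1 ≤ RingHom.ker evalPoint := by
    refine Ideal.span_le.mpr ?_
    rintro _ ⟨i, rfl⟩
    simp [evalPoint, RingHom.mem_ker, hroot]
  refine ⟨Ideal.Quotient.liftₐ _ evalPoint evalPoint_eq_zero, fun ε => ?_⟩
  exact (Ideal.Quotient.liftₐ_apply ..).trans (aeval_X _ _)

theorem exists_mul_add_mul_eq_zero_and_apply_eq_one {k : Type*} [Field k] (α β : k) :
    ∃ (d : Fin 2 → k) (ε : Fin 2), α * d 0 + β * d 1 = 0 ∧ d ε = 1 := by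
  by_cases hα : α = 0
  · exact ⟨![1, 0], 0, by simp [hα], rfl⟩
  · exact ⟨![-β / α, 1], 1, by simp [mul_div_cancel₀ _ hα], rfl⟩

theorem subsingleton_setOf_algHom_coord_inl_eq_zero (hp : ∀ i, p i ≠ 0)
    (hdist : ∀ i j, i ≠ j → c0 i * c1 j ≠ c1 i * c0 j) {E : SAlg ι p c0 c1 →ₐ[ℂ] ℂ} {ε : Fin 2}
    (hE : E (coord p c0 c1 (Sum.inr ε)) ≠ 0) :
    {i | E (coord p c0 c1 (Sum.inl i)) = 0}.Subsingleton := by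
  intro i hi j hj
  by_contra hij
  have hdet := sub_ne_zero.mpr (hdist i j hij)
  have form_eq_zero {l} (hl : E (coord p c0 c1 (Sum.inl l)) = 0) :
      c0 l * E (coord p c0 c1 (Sum.inr 0)) + c1 l * E (coord p c0 c1 (Sum.inr 1)) = 0 := by
    rw [← algHom_coord_inl_pow, hl, zero_pow (hp l)]
  refine hE ((mul_eq_zero.mp ?_).resolve_left hdet)
  obtain rfl | rfl : ε = 0 ∨ ε = 1 := by omega
  · linear_combination c1 j * form_eq_zero hi - c1 i * form_eq_zero hj
  · linear_combination c0 i * form_eq_zero hj - c0 j * form_eq_zero hi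

variable [DecidableEq ι]

theorem coord_mem_veronesePiece (x : LGroup ι p) (v : ι ⊕ Fin 2) :
    coord p c0 c1 v ∈ veronesePiece p c0 c1 x (veroneseWeight p x v) :=
  Submodule.mem_map_of_mem (isWeightedHomogeneous_X ℂ _ v)

variable [Fintype ι]

variable (c0 c1) in
theorem exists_coord_inr_pow_mem_SVerA (hp : ∀ i, p i ≠ 0) {x : LGroup ι p}
    (hx : ¬ IsOfFinAddOrder x) :
    ∃ m, 0 < m ∧ ∀ ε, coord p c0 c1 (Sum.inr ε) ^ m ∈ SVerA p c0 c1 x := by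
  obtain ⟨k, m, hm, hkm⟩ := exists_zsmul_eq_nsmul_cgen hp hx
  refine ⟨m, hm, fun ε => ?_⟩
  have degree_eq_zero : m • veroneseWeight p x (Sum.inr ε) = 0 := by
    simpa using sum_nsmul_veroneseWeight_add_nsmul (y := 0) (k := k) (b := 0) (by simpa) ε
  rw [SVerA_eq_veronesePiece_zero, ← degree_eq_zero]
  exact SetLike.pow_mem_graded m (coord_mem_veronesePiece x _)

theorem residue_wtA (i : ι) (m : (ι ⊕ Fin 2) →₀ ℕ) : residue p i (wtA p m) = m (Sum.inl i) := by
  simp [wtA, residue_egen, residue_cgen]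

theorem coord_inl_dvd_of_mem_SShiftA {i : ι} {x y : LGroup ι p}
    (hres : ∀ k : ℤ, residue p i (y + k • x) ≠ 0) {s : SAlg ι p c0 c1}
    (hs : s ∈ SShiftA p c0 c1 y x) : coord p c0 c1 (Sum.inl i) ∣ s := by
  suffices SShiftA p c0 c1 y x ≤
      (Ideal.span {coord p c0 c1 (Sum.inl i)}).restrictScalars ℂ from
    Ideal.mem_span_singleton.mp (this hs)
  refine iSup_le fun k => Submodule.map_le_iff_le_comap.mpr fun f hf => ?_
  have X_dvd : (X (Sum.inl i) : SPoly ι) ∣ f := by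
    rw [← Ideal.mem_span_singleton, ← Set.image_singleton, mem_ideal_span_X_image]
    refine fun m hm => ⟨Sum.inl i, rfl, fun hmi => hres k ?_⟩
    rw [← hf m (mem_support_iff.mp hm), residue_wtA, hmi, Nat.cast_zero]
  exact Ideal.mem_span_singleton.mpr (map_dvd (Ideal.Quotient.mkₐ ℂ (SIdl ι p c0 c1)) X_dvd)

theorem exists_mem_SShiftA_algHom_ne_zero (hp : ∀ i, p i ≠ 0)
    (hdist : ∀ i j, i ≠ j → c0 i * c1 j ≠ c1 i * c0 j) {x : LGroup ι p}
    (hx : ¬ IsOfFinAddOrder x) (hunit : ∀ i, IsUnit (residue p i x))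
    {E : SAlg ι p c0 c1 →ₐ[ℂ] ℂ} {ε : Fin 2} (hE : E (coord p c0 c1 (Sum.inr ε)) ≠ 0)
    (y : LGroup ι p) : ∃ s ∈ SShiftA p c0 c1 y x, E s ≠ 0 := by
  obtain ⟨k, b, β, hb, hk⟩ := exists_add_zsmul_eq_sum_nsmul_egen_add_nsmul_cgen hp hx
    (subsingleton_setOf_algHom_coord_inl_eq_zero hp hdist hE) (fun i _ => hunit i) y
  refine ⟨(∏ i, coord p c0 c1 (Sum.inl i) ^ b i) * coord p c0 c1 (Sum.inr ε) ^ β, ?_, ?_⟩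
  · rw [SShiftA_eq_veronesePiece, ← sum_nsmul_veroneseWeight_add_nsmul hk ε]
    exact SetLike.mul_mem_graded
      (SetLike.prod_mem_graded _ _ _ fun i _ =>
        SetLike.pow_mem_graded _ (coord_mem_veronesePiece x _))
      (SetLike.pow_mem_graded _ (coord_mem_veronesePiece x _))
  · simp only [map_mul, map_prod, map_pow]
    refine mul_ne_zero (Finset.prod_ne_zero_iff.mpr fun i _ => ?_) (pow_ne_zero β hE)
    by_cases hi : E (coord p c0 c1 (Sum.inl i)) = 0
    · rw [hb i hi, pow_zero]
      exact one_ne_zero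
    · exact pow_ne_zero _ hi

end Coordinates

section Cofiniteness

variable {ι : Type} [Fintype ι] [DecidableEq ι] {p : ι → ℕ} {c0 c1 : ι → ℂ} {x : LGroup ι p}
  {R : Subalgebra ℂ (SAlg ι p c0 c1)}

theorem algHom_coord_eq_zero_of_productIdeal (hp : ∀ i, p i ≠ 0)
    (hdist : ∀ i j, i ≠ j → c0 i * c1 j ≠ c1 i * c0 j) (hx : ¬ IsOfFinAddOrder x)
    (hR : Subalgebra.toSubmodule R = SVerA p c0 c1 x) (hunit : ∀ i, IsUnit (residue p i x))
    (z : LGroup ι p) {E : SAlg ι p c0 c1 →ₐ[ℂ] ℂ}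
    (hE : ∀ r ∈ productIdeal R (SShiftA p c0 c1 z x) (SShiftA p c0 c1 (-z) x), E r = 0)
    (v : ι ⊕ Fin 2) : E (coord p c0 c1 v) = 0 := by
  have coord_inr_eq_zero (ε : Fin 2) : E (coord p c0 c1 (Sum.inr ε)) = 0 := by
    by_contra hε
    obtain ⟨s, hs, hEs⟩ := exists_mem_SShiftA_algHom_ne_zero hp hdist hx hunit hε z
    obtain ⟨t, ht, hEt⟩ := exists_mem_SShiftA_algHom_ne_zero hp hdist hx hunit hε (-z)
    have mul_mem_R : s * t ∈ R := by
      rw [SShiftA_eq_veronesePiece] at hs ht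
      rw [← Subalgebra.mem_toSubmodule, hR, SVerA_eq_veronesePiece_zero,
        ← QuotientAddGroup.mk_zero, ← add_neg_cancel z]
      exact SetLike.mul_mem_graded hs ht
    have := hE ⟨s * t, mul_mem_R⟩ (Ideal.subset_span ⟨s, hs, t, ht, rfl⟩)
    exact mul_ne_zero hEs hEt (by rwa [← map_mul])
  rcases v with i | ε
  · rw [← pow_eq_zero_iff (hp i), algHom_coord_inl_pow, coord_inr_eq_zero, coord_inr_eq_zero,
      mul_zero, mul_zero, add_zero]
  · exact coord_inr_eq_zero ε

theorem finite_quotient_productIdeal (hp : ∀ i, p i ≠ 0)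
    (hdist : ∀ i j, i ≠ j → c0 i * c1 j ≠ c1 i * c0 j) (hx : ¬ IsOfFinAddOrder x)
    (hR : Subalgebra.toSubmodule R = SVerA p c0 c1 x) (hunit : ∀ i, IsUnit (residue p i x))
    (z : LGroup ι p) :
    Module.Finite ℂ (R ⧸ productIdeal R (SShiftA p c0 c1 z x) (SShiftA p c0 c1 (-z) x)) := by
  obtain ⟨π, hπ⟩ := exists_retraction_of_toSubmodule_eq_SVerA hR
  refine finite_quotient_of_retraction_of_algHom_eq_zero π hπ _
    (Set.finite_range (coord p c0 c1)) (adjoin_range_coord p c0 c1) fun E hE => ?_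
  exact Set.forall_mem_range.mpr
    (algHom_coord_eq_zero_of_productIdeal hp hdist hx hR hunit z hE)

theorem productIdeal_egen_le_ker (i : ι) (hnonunit : ¬ IsUnit (residue p i x))
    (N : Submodule ℂ (SAlg ι p c0 c1)) {E : SAlg ι p c0 c1 →ₐ[ℂ] ℂ}
    (hE : E (coord p c0 c1 (Sum.inl i)) = 0) :
    productIdeal R (SShiftA p c0 c1 (egen p i) x) N ≤ RingHom.ker (E.comp R.val) := by
  have residue_ne_zero (k : ℤ) : residue p i (egen p i + k • x) ≠ 0 := fun h => by
    rw [map_add, residue_egen, if_pos rfl, map_zsmul, zsmul_eq_mul] at h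
    exact hnonunit (IsUnit.of_mul_eq_one (-(k : ZMod (p i))) (by linear_combination -h))
  refine Ideal.span_le.mpr ?_
  rintro r ⟨s, hs, t, -, hst⟩
  obtain ⟨s', rfl⟩ := coord_inl_dvd_of_mem_SShiftA residue_ne_zero hs
  simp [RingHom.mem_ker, hst, hE]

theorem isUnit_residue_of_finite_quotient_productIdeal (hp : ∀ i, p i ≠ 0)
    (hx : ¬ IsOfFinAddOrder x) (hR : Subalgebra.toSubmodule R = SVerA p c0 c1 x) (i : ι)
    (N : Submodule ℂ (SAlg ι p c0 c1))
    (hfin : Module.Finite ℂ (R ⧸ productIdeal R (SShiftA p c0 c1 (egen p i) x) N)) :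
    IsUnit (residue p i x) := by
  by_contra hnonunit
  obtain ⟨d, ε, hd, hdε⟩ := exists_mul_add_mul_eq_zero_and_apply_eq_one (c0 i) (c1 i)
  obtain ⟨m, hm, pow_mem⟩ := exists_coord_inr_pow_mem_SVerA c0 c1 hp hx
  have pow_mem_R : coord p c0 c1 (Sum.inr ε) ^ m ∈ R := by
    rw [← Subalgebra.mem_toSubmodule, hR]
    exact pow_mem ε
  refine not_finite_of_forall_exists_algHom_apply_eq (k := ℂ)
    (Ideal.Quotient.mkₐ ℂ _ (⟨_, pow_mem_R⟩ : R)) (fun r => ?_) hfin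
  obtain ⟨r', rfl⟩ := IsAlgClosed.exists_pow_nat_eq r hm
  obtain ⟨E, hE⟩ := exists_algHom_coord_inr_eq c0 c1 hp fun η => r' * d η
  have hEi : E (coord p c0 c1 (Sum.inl i)) = 0 := by
    rw [← pow_eq_zero_iff (hp i), algHom_coord_inl_pow, hE, hE]
    linear_combination r' * hd
  refine ⟨Ideal.Quotient.liftₐ _ (E.comp R.val) (productIdeal_egen_le_ker i hnonunit N hEi), ?_⟩
  refine (Ideal.Quotient.liftₐ_apply ..).trans ?_
  change E (coord p c0 c1 (Sum.inr ε) ^ m) = r' ^ m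
  rw [map_pow, hE, hdε, mul_one]

end Cofiniteness

theorem veronese_cofinite_iff_coprime_general {ι : Type} [Fintype ι] [DecidableEq ι] (p : ι → ℕ)
    (hp : ∀ i, p i ≠ 0) (c0 c1 : ι → ℂ) (hdist : ∀ i j, i ≠ j → c0 i * c1 j ≠ c1 i * c0 j)
    (x : LGroup ι p) (hx : ¬ IsOfFinAddOrder x) (a : ι → ℤ) (aZ : ℤ)
    (hxrep : x = ∑ i, a i • egen p i + aZ • cgen p) (R : Subalgebra ℂ (SAlg ι p c0 c1))
    (hR : Subalgebra.toSubmodule R = SVerA p c0 c1 x) :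
    (∀ z, FiniteDimensional ℂ
        (R ⧸ productIdeal R (SShiftA p c0 c1 z x) (SShiftA p c0 c1 (-z) x))) ↔
      ∀ i, IsCoprime (a i) (p i : ℤ) := by
  have isUnit_residue_iff (i : ι) : IsUnit (residue p i x) ↔ IsCoprime (a i) (p i : ℤ) := by
    rw [hxrep, residue_sum_zsmul_egen_add_zsmul_cgen, ZMod.coe_int_isUnit_iff_isCoprime,
      isCoprime_comm]
  simp_rw [← isUnit_residue_iff]
  exact ⟨fun h i => isUnit_residue_of_finite_quotient_productIdeal hp hx hR i _ (h (egen p i)),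
    finite_quotient_productIdeal hp hdist hx hR⟩

/-- For a non-torsion `x ∈ L` with normal form
`x = a₁e₁ + ⋯ + aₙeₙ + a·c`, the ideals `I^z := S(z)^x · S(−z)^x` of `R := S^x` are
all of finite codimension if and only if `gcd(pᵢ, aᵢ) = 1` for all `i`. -/
theorem veronese_cofinite_iff_coprime (n : ℕ) (hn : 1 ≤ n) (p : Fin n → ℕ)
    (hp : ∀ i, 2 ≤ p i)
    (c0 c1 : Fin n → ℂ) (hnz : ∀ i, (c0 i, c1 i) ≠ (0, 0))
    (hdist : ∀ i j : Fin n, i ≠ j → c0 i * c1 j ≠ c1 i * c0 j)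
    (x : LGroup (Fin n) p) (hx : ∀ m : ℤ, m ≠ 0 → m • x ≠ 0)
    (a : Fin n → ℕ) (ha : ∀ i, a i < p i) (aZ : ℤ)
    (hxnf : x = (∑ i, a i • egen p i) + aZ • cgen p)
    (R : Subalgebra ℂ (SAlg (Fin n) p c0 c1))
    (hR : Subalgebra.toSubmodule R = SVerA p c0 c1 x) :
    (∀ z : LGroup (Fin n) p,
        FiniteDimensional ℂ
          (↥R ⧸ Ideal.span { w : ↥R | ∃ s ∈ SShiftA p c0 c1 z x,
              ∃ t ∈ SShiftA p c0 c1 (-z) x, (w : SAlg (Fin n) p c0 c1) = s * t })) ↔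
      ∀ i, Nat.gcd (p i) (a i) = 1 := by
  have gcd_eq_one_iff (i : Fin n) : Nat.gcd (p i) (a i) = 1 ↔ IsCoprime (a i : ℤ) (p i : ℤ) := by
    rw [Nat.isCoprime_iff_coprime, Nat.coprime_comm, Nat.coprime_iff_gcd_eq_one]
  simp_rw [gcd_eq_one_iff]
  exact veronese_cofinite_iff_coprime_general p (fun i => by have := hp i; omega) c0 c1 hdist x
    (by simpa [isOfFinAddOrder_iff_zsmul_eq_zero] using hx) (fun i => a i) aZ (by simpa using hxnf)
    R hR
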